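/- arXiv:2308.00577 — 2 statements merged into one kernel-verified Lean document; each statement's English description precedes it below -/
import Mathlib

section
/- Let B be a group, η : B → ℤ a surjective homomorphism with kernel L, m ≥ 1, and g ∈ B such that: (a) η(g) = 1 and g^{2m} commutes with every element of L; (b) there is a subgroup H ≤ L with g⁻ᵐ H gᵐ = H, with γ : H → H the automorphism γ(h) = g⁻ᵐ h gᵐ; (c) there is a subgroup G ≤ L such that L is the internal direct product of Gᵢ := gⁱ G g⁻ⁱ, i = 0, …, 2m−1, and Hⱼ := gʲ H g⁻ʲ, j = 0, …, m−1. Define θ₀ : (Fin (2m) → G) × (Fin m → H) → B by θ₀(a, b) = ∏_{i=0}^{2m−1} gⁱ a(i) g⁻ⁱ · ∏_{j=0}^{m−1} gʲ b(j) g⁻ʲ. Then θ₀ is a group isomorphism onto L which intertwines the twisted shift δ with conjugation by g, i.e. θ₀(δ(a, b)) = g · θ₀(a, b) · g⁻¹ for all (a, b). -/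
instance twNeZero (m : ℕ) [NeZero m] : NeZero (2 * m) :=
  ⟨by have := NeZero.ne m; omega⟩

/-- The twisted shift automorphism `δ` of `(Fin (2m) → G) × (Fin m → H)`:
`δ(a,b) = (a', b')` with `a'(i) = a(i−1)` (mod 2m), `b'(j) = b(j−1)` for `j ≠ 0` and
`b'(0) = γ(b(m−1))`. -/
def twShift (G H : Type*) [Group G] [Group H] (m : ℕ) [NeZero m] (γ : MulAut H) :
    MulAut ((Fin (2 * m) → G) × (Fin m → H)) where
  toFun p := (fun i => p.1 (i - 1),
              fun j => if j = 0 then γ (p.2 (j - 1)) else p.2 (j - 1))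
  invFun p := (fun i => p.1 (i + 1),
              fun j => if j + 1 = 0 then γ.symm (p.2 (j + 1)) else p.2 (j + 1))
  left_inv p := by
    refine Prod.ext ?_ ?_
    · funext i; simp
    · funext j
      by_cases h : j + 1 = 0
      · simp [h, eq_neg_of_add_eq_zero_left h]
      · simp [h]
  right_inv p := by
    refine Prod.ext ?_ ?_
    · funext i; simp
    · funext j
      by_cases h : j = 0 <;> simp [h]
  map_mul' p q := by
    refine Prod.ext ?_ ?_
    · rfl
    · funext j
      by_cases h : j = 0 <;> simp [h]

/-- The conjugate `g S g⁻¹` of a subgroup `S` by an element `g`. -/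
def conjSub {B : Type*} [Group B] (g : B) (S : Subgroup B) : Subgroup B :=
  Subgroup.map (MulAut.conj g).toMonoidHom S

/-- The ordered-product map `(Π i, gⁱ G g⁻ⁱ) × (Π j, gʲ H g⁻ʲ) → B`,
`(x, y) ↦ x₀⋯x_{2m−1} · y₀⋯y_{m−1}`. -/
def dmap2 {B : Type*} [Group B] (m : ℕ) (g : B) (G H : Subgroup B) :
    ((∀ i : Fin (2 * m), ↥(conjSub (g ^ (i : ℕ)) G)) ×
      (∀ j : Fin m, ↥(conjSub (g ^ (j : ℕ)) H))) → B :=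
  fun u => (List.ofFn fun i => (u.1 i : B)).prod * (List.ofFn fun j => (u.2 j : B)).prod

/-- The map `θ₀ : (Fin 2m → G) × (Fin m → H) → B`,
`θ₀(a, b) = ∏_{i<2m} gⁱ a(i) g⁻ⁱ · ∏_{j<m} gʲ b(j) g⁻ʲ`. -/
def theta0 {B : Type*} [Group B] (m : ℕ) [NeZero m] (g : B) (G H : Subgroup B) :
    ((Fin (2 * m) → ↥G) × (Fin m → ↥H)) → B :=
  fun p =>
    (List.ofFn fun i : Fin (2 * m) =>
        g ^ (i : ℕ) * ((p.1 i : B)) * (g ^ (i : ℕ))⁻¹).prod *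
    (List.ofFn fun j : Fin m =>
        g ^ (j : ℕ) * ((p.2 j : B)) * (g ^ (j : ℕ))⁻¹).prod

/-!
Rotating the factors of an ordered product changes nothing when they commute pairwise, and
multiplicativity of `θ₀` forces the factors within each of its two blocks to commute. Conjugation
by `g` sends `gⁱ x g⁻ⁱ` to `gⁱ⁺¹ x g⁻⁽ⁱ⁺¹⁾`, so only the last factor of each block needs care: `g²ᵐ`
centralizes `G`, so `g²ᵐ a(2m-1) g⁻²ᵐ = a(2m-1)`, and it centralizes `H`, so
`gᵐ b(m-1) g⁻ᵐ = g⁻ᵐ b(m-1) gᵐ = γ(b(m-1))`. These are the wrap-around entries of `δ`.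
-/

section OrderedProduct

variable {M : Type*} [Monoid M] {n : ℕ}

lemma prod_ofFn_comp_perm {f : Fin n → M} (hf : Pairwise fun i j => Commute (f i) (f j))
    (σ : Equiv.Perm (Fin n)) : (List.ofFn (f ∘ σ)).prod = (List.ofFn f).prod := by
  refine ((σ.ofFn_comp_perm f).symm.prod_eq' ?_).symm
  exact List.pairwise_ofFn.mpr fun i j hij => hf hij.ne

variable {N : Fin n → Type*} [∀ i, Monoid (N i)] (f : ∀ i, N i →* M)

lemma prod_ofFn_map_mulSingle (i : Fin n) (x : N i) :
    (List.ofFn fun j => f j (Pi.mulSingle i x j)).prod = f i x := by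
  have hone : ∀ j ≠ i, j ∈ List.finRange n → f j (Pi.mulSingle i x j) = 1 := fun j hj _ => by
    rw [Pi.mulSingle_eq_of_ne hj, map_one]
  rw [List.ofFn_eq_map, List.prod_map_eq_pow_single i _ hone,
    List.count_eq_one_of_mem (List.nodup_finRange n) (List.mem_finRange i), pow_one,
    Pi.mulSingle_eq_same]

lemma commute_map_of_prod_ofFn_map_mul
    (hmul : ∀ a b : ∀ i, N i, (List.ofFn fun i => f i ((a * b) i)).prod =
      (List.ofFn fun i => f i (a i)).prod * (List.ofFn fun i => f i (b i)).prod)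
    {i j : Fin n} (hij : i ≠ j) (x : N i) (y : N j) : Commute (f i x) (f j y) := by
  have hsingle := (Pi.mulSingle_commute hij x y).eq
  rw [← prod_ofFn_map_mulSingle f i, ← prod_ofFn_map_mulSingle f j, commute_iff_eq, ← hmul,
    ← hmul, hsingle]

end OrderedProduct

section ConjProd

variable {B : Type*} [Group B] {n : ℕ}

/-- The ordered product `a(0) · g a(1) g⁻¹ ⋯ gⁿ⁻¹ a(n-1) g⁻⁽ⁿ⁻¹⁾`; the map `θ₀` is a product of two
of these. -/
def conjProd (g : B) (a : Fin n → B) : B :=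
  (List.ofFn fun i : Fin n => MulAut.conj (g ^ (i : ℕ)) (a i)).prod

lemma conjProd_one (g : B) : conjProd g (1 : Fin n → B) = 1 := by
  simp [conjProd]

lemma conj_conj_pow_apply (g : B) (k : ℕ) (x : B) :
    MulAut.conj g (MulAut.conj (g ^ k) x) = MulAut.conj (g ^ (k + 1)) x := by
  rw [pow_succ', map_mul, MulAut.mul_apply]

lemma conjProd_eq_conj_of_twisted_shift [NeZero n] (g : B) {a a' : Fin n → B}
    (hcomm : Pairwise fun i j : Fin n =>
      Commute (MulAut.conj (g ^ (i : ℕ)) (a i)) (MulAut.conj (g ^ (j : ℕ)) (a j)))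
    (hzero : a' 0 = MulAut.conj (g ^ n) (a (0 - 1))) (hshift : ∀ i ≠ 0, a' i = a (i - 1)) :
    conjProd g a' = g * conjProd g a * g⁻¹ := by
  have hfactor (i : Fin n) : MulAut.conj (g ^ (i : ℕ)) (a' i) =
      MulAut.conj g (MulAut.conj (g ^ ((i - 1 : Fin n) : ℕ)) (a (i - 1))) := by
    obtain _ | n := n
    · exact i.elim0
    rw [conj_conj_pow_apply, Fin.coe_sub_one]
    obtain rfl | hi := eq_or_ne i 0
    · simp [hzero]
    · have hpos : 0 < (i : ℕ) := Nat.pos_of_ne_zero (Fin.val_ne_zero_iff.mpr hi)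
      rw [if_neg hi, Nat.sub_add_cancel hpos, hshift i hi]
  calc conjProd g a'
      = MulAut.conj g (List.ofFn ((fun i : Fin n => MulAut.conj (g ^ (i : ℕ)) (a i)) ∘
          Equiv.subRight 1)).prod := by
        rw [map_list_prod, List.map_ofFn, conjProd, funext hfactor]
        rfl
    _ = g * conjProd g a * g⁻¹ := by
        rw [prod_ofFn_comp_perm hcomm, MulAut.conj_apply, conjProd]

lemma commute_conj_of_conjProd_mul {g : B} {S : Subgroup B}
    (hmul : ∀ a b : Fin n → S, conjProd g (fun i => ((a * b) i : B)) =
      conjProd g (fun i => (a i : B)) * conjProd g (fun i => (b i : B)))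
    (a : Fin n → S) : Pairwise fun i j : Fin n =>
      Commute (MulAut.conj (g ^ (i : ℕ)) (a i)) (MulAut.conj (g ^ (j : ℕ)) (a j)) :=
  fun i j hij => commute_map_of_prod_ofFn_map_mul
    (fun i : Fin n => (MulAut.conj (g ^ (i : ℕ))).toMonoidHom.comp S.subtype) hmul hij (a i) (a j)

lemma inv_mul_mul_eq_conj_of_commute_sq {x y : B} (h : Commute (x ^ 2) y) :
    x⁻¹ * y * x = MulAut.conj x y := by
  rw [MulAut.conj_apply, eq_mul_inv_iff_mul_eq, mul_assoc, mul_assoc, inv_mul_eq_iff_eq_mul,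
    ← sq, ← h.eq, sq, mul_assoc]

end ConjProd

section Theta

variable {B : Type*} [Group B] {m : ℕ} [NeZero m] {g : B} {G H : Subgroup B}

lemma theta0_eq_conjProd_mul_conjProd (p : (Fin (2 * m) → G) × (Fin m → H)) :
    theta0 m g G H p = conjProd g (fun i => (p.1 i : B)) * conjProd g (fun j => (p.2 j : B)) :=
  rfl

lemma theta0_twShift {γ : MulAut H}
    (hmul : ∀ p q, theta0 m g G H (p * q) = theta0 m g G H p * theta0 m g G H q)
    (hG : ∀ x ∈ G, Commute (g ^ (2 * m)) x) (hH : ∀ x ∈ H, Commute (g ^ (2 * m)) x)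
    (hγ : ∀ h : H, (γ h : B) = (g ^ m)⁻¹ * h * g ^ m) (p : (Fin (2 * m) → G) × (Fin m → H)) :
    theta0 m g G H (twShift G H m γ p) = g * theta0 m g G H p * g⁻¹ := by
  have hmulG (a b : Fin (2 * m) → G) : conjProd g (fun i => ((a * b) i : B)) =
      conjProd g (fun i => (a i : B)) * conjProd g (fun i => (b i : B)) := by
    simpa [theta0_eq_conjProd_mul_conjProd, ← Pi.one_def, conjProd_one] using hmul (a, 1) (b, 1)
  have hmulH (a b : Fin m → H) : conjProd g (fun j => ((a * b) j : B)) =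
      conjProd g (fun j => (a j : B)) * conjProd g (fun j => (b j : B)) := by
    simpa [theta0_eq_conjProd_mul_conjProd, ← Pi.one_def, conjProd_one] using hmul (1, a) (1, b)
  have hshiftG : conjProd g (fun i => ((twShift G H m γ p).1 i : B)) =
      g * conjProd g (fun i => (p.1 i : B)) * g⁻¹ := by
    refine conjProd_eq_conj_of_twisted_shift g (commute_conj_of_conjProd_mul hmulG p.1) ?_
      fun i _ => rfl
    exact (hG _ (p.1 (0 - 1)).2).mul_inv_cancel.symm
  have hshiftH : conjProd g (fun j => ((twShift G H m γ p).2 j : B)) =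
      g * conjProd g (fun j => (p.2 j : B)) * g⁻¹ := by
    refine conjProd_eq_conj_of_twisted_shift g (commute_conj_of_conjProd_mul hmulH p.2) ?_
      fun j hj => congrArg Subtype.val (if_neg hj)
    have hsq : Commute ((g ^ m) ^ 2) (p.2 (0 - 1) : B) := by
      rw [← pow_mul']
      exact hH _ (p.2 (0 - 1)).2
    exact (congrArg Subtype.val (if_pos rfl)).trans
      ((hγ _).trans (inv_mul_mul_eq_conj_of_commute_sq hsq))
  simp only [theta0_eq_conjProd_mul_conjProd, hshiftG, hshiftH, conj_mul]

/-- Coordinatewise conjugation by `gⁱ`, identifying `Sⁿ` with the product of the conjugates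
`gⁱ S g⁻ⁱ`; it carries `θ₀` to the internal product map. -/
def piConjEquiv (g : B) (S : Subgroup B) (n : ℕ) :
    (Fin n → S) ≃* ∀ i : Fin n, conjSub (g ^ (i : ℕ)) S :=
  MulEquiv.piCongrRight fun i => (MulAut.conj (g ^ (i : ℕ))).subgroupMap S

lemma theta0_eq_dmap2_comp_piConjEquiv :
    theta0 m g G H =
      dmap2 m g G H ∘ (piConjEquiv g G (2 * m)).prodCongr (piConjEquiv g H m) :=
  rfl

lemma theta0_mul
    (hhom : ∀ u v, dmap2 m g G H (u * v) = dmap2 m g G H u * dmap2 m g G H v)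
    (p q : (Fin (2 * m) → G) × (Fin m → H)) :
    theta0 m g G H (p * q) = theta0 m g G H p * theta0 m g G H q := by
  simp only [theta0_eq_dmap2_comp_piConjEquiv, Function.comp_apply, map_mul, hhom]

lemma theta0_injective (hinj : Function.Injective (dmap2 m g G H)) :
    Function.Injective (theta0 m g G H) :=
  hinj.comp ((piConjEquiv g G (2 * m)).prodCongr (piConjEquiv g H m)).injective

variable (m g G H) in
lemma range_theta0 : Set.range (theta0 m g G H) = Set.range (dmap2 m g G H) := by
  rw [theta0_eq_dmap2_comp_piConjEquiv, (MulEquiv.surjective _).range_comp]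

end Theta

theorem stmt_7_general {B : Type*} [Group B] (L : Subgroup B) (m : ℕ) [NeZero m] (g : B)
    (G H : Subgroup B) (hG : ∀ x ∈ G, Commute (g ^ (2 * m)) x)
    (hH : ∀ x ∈ H, Commute (g ^ (2 * m)) x) (γ : MulAut H)
    (hγ : ∀ h : H, (γ h : B) = (g ^ m)⁻¹ * h * g ^ m)
    (hhom : ∀ u v, dmap2 m g G H (u * v) = dmap2 m g G H u * dmap2 m g G H v)
    (hinj : Function.Injective (dmap2 m g G H))
    (hrange : Set.range (dmap2 m g G H) = L) :
    (∀ p q, theta0 m g G H (p * q) = theta0 m g G H p * theta0 m g G H q) ∧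
    Function.Injective (theta0 m g G H) ∧
    Set.range (theta0 m g G H) = L ∧
    ∀ p, theta0 m g G H (twShift G H m γ p) = g * theta0 m g G H p * g⁻¹ :=
  ⟨theta0_mul hhom, theta0_injective hinj, (range_theta0 m g G H).trans hrange,
    theta0_twShift (theta0_mul hhom) hG hH hγ⟩

/-- Under the hypotheses of Statement 6, the map
`θ₀(a,b) = ∏ᵢ gⁱ a(i) g⁻ⁱ · ∏ⱼ gʲ b(j) g⁻ʲ` is a group isomorphism from
`(Fin 2m → G) × (Fin m → H)` onto `L = ker η`, and it intertwines the twisted shift `δ`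
with conjugation by `g`: `θ₀(δ(a,b)) = g · θ₀(a,b) · g⁻¹`. -/
theorem stmt_7 {B : Type*} [Group B] (η : B →* Multiplicative ℤ)
    (hsurj : Function.Surjective η) (m : ℕ) (hm : 1 ≤ m) [NeZero m] (g : B)
    (hg : η g = Multiplicative.ofAdd 1)
    (hcomm : ∀ v ∈ η.ker, Commute (g ^ (2 * m)) v)
    (H : Subgroup B) (hHL : H ≤ η.ker)
    (γ : MulAut ↥H)
    (hγ : ∀ h : ↥H, (γ h : B) = (g ^ m)⁻¹ * ↑h * g ^ m)
    (G : Subgroup B) (hGL : G ≤ η.ker)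
    (hhom : ∀ u v, dmap2 m g G H (u * v) = dmap2 m g G H u * dmap2 m g G H v)
    (hinj : Function.Injective (dmap2 m g G H))
    (hrange : Set.range (dmap2 m g G H) = (η.ker : Set B)) :
    (∀ p q : (Fin (2 * m) → ↥G) × (Fin m → ↥H),
        theta0 m g G H (p * q) = theta0 m g G H p * theta0 m g G H q) ∧
    Function.Injective (theta0 m g G H) ∧
    Set.range (theta0 m g G H) = (η.ker : Set B) ∧
    (∀ p : (Fin (2 * m) → ↥G) × (Fin m → ↥H),
        theta0 m g G H (twShift ↥G ↥H m γ p) = g * theta0 m g G H p * g⁻¹) :=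
  stmt_7_general η.ker m g G H (fun x hx => hcomm x (hGL hx)) (fun x hx => hcomm x (hHL hx)) γ hγ
    hhom hinj hrange
end

section
/- Let g ∈ ℝ[x, y] be a squarefree homogeneous polynomial of degree d ≥ 2. Then there exists m ≥ 1 such that both x^m and y^m lie in the Jacobian ideal J(g) of g, i.e. in the ideal of ℝ[x, y] generated by the partial derivatives ∂g/∂x and ∂g/∂y. -/
open MvPolynomial

/-!
Set `y = 1` in the squarefree form `g` to get a squarefree, hence separable, univariate polynomial
`p`. The partial derivatives of `g` become `p'` and, by Euler's identity, `d p - x p'`. They are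
coprime because `p` and `p'` are and `d` is invertible. Homogenizing a Bézout identity between them
puts a power of `y` in the Jacobian ideal, and exchanging the variables does the same for `x`.
-/

section Dehomogenize

variable {R : Type*} [CommSemiring R] {g : MvPolynomial (Fin 2) R} {d : ℕ}

/-- The dehomogenization `g(x, 1)` of a polynomial `g(x, y)`, in the form in which it occurs in
the lemmas on `Polynomial.homogenize`. -/
noncomputable abbrev dehomogenize : MvPolynomial (Fin 2) R →ₐ[R] Polynomial R :=
  aeval ![Polynomial.X, 1]

theorem dehomogenize_pderiv_zero (g : MvPolynomial (Fin 2) R) :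
    dehomogenize (pderiv 0 g) = Polynomial.derivative (dehomogenize g) := by
  induction g using MvPolynomial.induction_on with
  | C a => simp
  | add p q hp hq => simp only [map_add, hp, hq]
  | mul_X p i hp => fin_cases i <;> simp [pderiv_X, hp, mul_comm]

theorem X_mul_dehomogenize_pderiv_zero_add (hg : g.IsHomogeneous d) :
    Polynomial.X * dehomogenize (pderiv 0 g) + dehomogenize (pderiv 1 g) =
      (d : Polynomial R) * dehomogenize g := by
  simpa using congrArg dehomogenize hg.sum_X_mul_pderiv

theorem natDegree_dehomogenize_le (hg : g.IsHomogeneous d) :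
    (dehomogenize g).natDegree ≤ d := by
  have natDegree_le_one (i : Fin 2) : (![Polynomial.X, (1 : Polynomial R)] i).natDegree ≤ 1 := by
    fin_cases i <;> simp [Polynomial.natDegree_X_le]
  simpa using aeval_natDegree_le g hg.totalDegree_le _ natDegree_le_one

theorem homogenize_dvd_of_dvd_dehomogenize [NoZeroDivisors R] (hg : g.IsHomogeneous d)
    {q : Polynomial R} (hq : q ∣ dehomogenize g) : q.homogenize q.natDegree ∣ g := by
  obtain ⟨k, rfl⟩ := Nat.exists_eq_add_of_le (natDegree_dehomogenize_le hg)
  have hg_eq : (dehomogenize g).homogenize (dehomogenize g).natDegree * X 1 ^ k = g := by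
    rw [← Polynomial.homogenize_one, ← Polynomial.homogenize_mul _ _ le_rfl (by simp), mul_one,
      Polynomial.homogenize_eq_of_isHomogeneous hg rfl]
  exact hg_eq ▸ (Polynomial.homogenize_dvd hq).mul_right _

theorem squarefree_dehomogenize [NoZeroDivisors R] (hg : g.IsHomogeneous d)
    (hsf : Squarefree g) : Squarefree (dehomogenize g) := by
  intro q hq
  have hdvd := homogenize_dvd_of_dvd_dehomogenize hg hq
  rw [← sq, Polynomial.natDegree_pow, two_mul, sq,
    Polynomial.homogenize_mul _ _ le_rfl le_rfl] at hdvd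
  simpa using (hsf _ hdvd).map dehomogenize

theorem homogenize_mul_dehomogenize (hg : g.IsHomogeneous d) {q : Polynomial R} {n : ℕ}
    (hq : q.natDegree ≤ n) : (q * dehomogenize g).homogenize (n + d) = q.homogenize n * g := by
  rw [Polynomial.homogenize_mul _ _ hq (natDegree_dehomogenize_le hg),
    Polynomial.homogenize_eq_of_isHomogeneous hg rfl]

theorem X_one_mem_radical_span_pair {u v : MvPolynomial (Fin 2) R} {m n : ℕ}
    (hu : u.IsHomogeneous m) (hv : v.IsHomogeneous n)
    (h : IsCoprime (dehomogenize u) (dehomogenize v)) :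
    X 1 ∈ (Ideal.span {u, v}).radical := by
  obtain ⟨a, b, hab⟩ := h
  let k := a.natDegree + b.natDegree
  have hau := homogenize_mul_dehomogenize hu (show a.natDegree ≤ k + n by lia)
  have hbv := homogenize_mul_dehomogenize hv (show b.natDegree ≤ k + m by lia)
  rw [add_right_comm] at hau
  refine ⟨k + m + n, Ideal.mem_span_pair.2 ⟨a.homogenize (k + n), b.homogenize (k + m), ?_⟩⟩
  rw [← hau, ← hbv, ← Polynomial.homogenize_add, hab, Polynomial.homogenize_one]

end Dehomogenize

theorem isCoprime_dehomogenize_pderiv {R : Type*} [CommRing R] {g : MvPolynomial (Fin 2) R}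
    {d : ℕ} (hg : g.IsHomogeneous d) (hd : IsUnit (d : R)) (hsep : (dehomogenize g).Separable) :
    IsCoprime (dehomogenize (pderiv 0 g)) (dehomogenize (pderiv 1 g)) := by
  have hd' : IsUnit (d : Polynomial R) := by simpa using hd.map Polynomial.C
  rw [← IsCoprime.mul_add_right_right_iff (z := Polynomial.X),
    X_mul_dehomogenize_pderiv_zero_add hg, isCoprime_mul_unit_left_right hd',
    dehomogenize_pderiv_zero]
  exact hsep.symm

section JacobianIdeal

variable {σ τ R : Type*} [CommSemiring R]

/-- The Jacobian ideal of `g`, generated by all its partial derivatives. -/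
noncomputable def jacobianIdeal (g : MvPolynomial σ R) : Ideal (MvPolynomial σ R) :=
  Ideal.span (Set.range fun i => pderiv i g)

theorem jacobianIdeal_fin_two (g : MvPolynomial (Fin 2) R) :
    jacobianIdeal g = Ideal.span {pderiv 0 g, pderiv 1 g} := by
  rw [jacobianIdeal]
  congr 1
  ext f
  simp [Fin.exists_fin_two, eq_comm]

theorem jacobianIdeal_rename (e : σ ≃ τ) (g : MvPolynomial σ R) :
    jacobianIdeal (rename e g) = (jacobianIdeal g).map (renameEquiv R e) := by
  rw [jacobianIdeal, jacobianIdeal, Ideal.map_span, ← Set.range_comp, ← EquivLike.range_comp _ e]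
  simp [Function.comp_def, pderiv_rename e.injective]

theorem rename_mem_jacobianIdeal_rename_iff (e : σ ≃ τ) {f g : MvPolynomial σ R} :
    rename e f ∈ jacobianIdeal (rename e g) ↔ f ∈ jacobianIdeal g := by
  rw [jacobianIdeal_rename, Ideal.mem_map_of_equiv]
  exact ⟨fun ⟨_, hmem, h⟩ => (renameEquiv R e).injective h ▸ hmem, fun h => ⟨f, h, rfl⟩⟩

end JacobianIdeal

theorem squarefree_map_mulEquiv {M N : Type*} [Monoid M] [Monoid N] (e : M ≃* N) {a : M}
    (ha : Squarefree a) : Squarefree (e a) := by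
  intro q hq
  have hdvd : e.symm q * e.symm q ∣ a := by simpa using map_dvd e.symm hq
  simpa using ha _ hdvd

section PerfectField

variable {K : Type*} [Field K] [PerfectField K] {g : MvPolynomial (Fin 2) K} {d : ℕ}

theorem X_one_mem_radical_jacobianIdeal (hg : g.IsHomogeneous d) (hd : (d : K) ≠ 0)
    (hsf : Squarefree g) : X 1 ∈ (jacobianIdeal g).radical := by
  have hsep : (dehomogenize g).Separable :=
    PerfectField.separable_iff_squarefree.2 (squarefree_dehomogenize hg hsf)
  rw [jacobianIdeal_fin_two]
  exact X_one_mem_radical_span_pair hg.pderiv hg.pderiv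
    (isCoprime_dehomogenize_pderiv hg hd.isUnit hsep)

theorem X_mem_radical_jacobianIdeal (hg : g.IsHomogeneous d) (hd : (d : K) ≠ 0)
    (hsf : Squarefree g) (i : Fin 2) : X i ∈ (jacobianIdeal g).radical := by
  let e := Equiv.swap i 1
  have hsf' : Squarefree (rename e g) := squarefree_map_mulEquiv (renameEquiv K e).toMulEquiv hsf
  obtain ⟨n, hn⟩ := X_one_mem_radical_jacobianIdeal hg.rename_isHomogeneous hd hsf'
  have hX : rename e (X i ^ n : MvPolynomial (Fin 2) K) = X 1 ^ n := by simp [e]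
  exact ⟨n, (rename_mem_jacobianIdeal_rename_iff e).1 (hX ▸ hn)⟩

theorem stmt_15_general (hd : (d : K) ≠ 0) (hsf : Squarefree g) (hg : g.IsHomogeneous d) :
    ∃ m : ℕ, 1 ≤ m ∧
      X 0 ^ m ∈ Ideal.span {pderiv 0 g, pderiv 1 g} ∧
      X 1 ^ m ∈ Ideal.span {pderiv 0 g, pderiv 1 g} := by
  rw [← jacobianIdeal_fin_two]
  obtain ⟨k, hk⟩ := X_mem_radical_jacobianIdeal hg hd hsf 0
  obtain ⟨l, hl⟩ := X_mem_radical_jacobianIdeal hg hd hsf 1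
  exact ⟨k + l + 1, by lia, Ideal.pow_mem_of_pow_mem _ hk (by lia),
    Ideal.pow_mem_of_pow_mem _ hl (by lia)⟩

end PerfectField

/-- If `g ∈ ℝ[x,y]` is a squarefree homogeneous polynomial of degree `d ≥ 2`,
then some power `x^m` and `y^m` (with `m ≥ 1`) lie in the Jacobian ideal of `g`,
i.e. the ideal generated by the two formal partial derivatives of `g`. -/
theorem stmt_15 (g : MvPolynomial (Fin 2) ℝ) (d : ℕ) (hd : 2 ≤ d)
    (hsf : Squarefree g) (hhom : g.IsHomogeneous d) :
    ∃ m : ℕ, 1 ≤ m ∧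
      X 0 ^ m ∈ Ideal.span ({pderiv (0 : Fin 2) g, pderiv (1 : Fin 2) g} :
        Set (MvPolynomial (Fin 2) ℝ)) ∧
      X 1 ^ m ∈ Ideal.span ({pderiv (0 : Fin 2) g, pderiv (1 : Fin 2) g} :
        Set (MvPolynomial (Fin 2) ℝ)) := by
  exact stmt_15_general (Nat.cast_ne_zero.2 (by lia)) hsf hhom
end
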